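/- arXiv:1902.04782 — 2 statements merged into one kernel-verified Lean document; each statement's English description precedes it below -/
import Mathlib

section
/- Let n, p be integers with 1 ≤ p ≤ n/2, and let K be a set-symmetric matrix indexed by the p-element subsets of {1,…,n} that is positive semidefinite with all diagonal entries at most 1. Then there exist λ_0,…,λ_p ≥ 0 with ∑_{i=0}^{p} λ_i ≤ 1 such that K = ∑_{i=0}^{p} λ_i K_i, where K_i is the matrix with entries K_i(S,T) = ∑_{t=0}^{p} β^{(i)}_t · C(|S ∩ T|, t) and β^{(i)} = (Δ^p)^{-1} e_i / ⟨η^p, (Δ^p)^{-1} e_i⟩. -/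
/-!
Write `f(k) = ∑_t b_t C(k, t)` for `k ≤ p` (Newton's formula), so `K = ∑_t b_t C_t` with
`C_t(S,T) = C(|S ∩ T|, t)`, and put `μ = Δ b`. The numbers `μ_j` are the eigenvalues of `K`: for
`j` disjoint pairs `{x_k, y_k}`, the function `v(S) = ∏_k (1[x_k ∈ S] − 1[y_k ∈ S])` on `p`-sets
is an eigenvector of every `C_t`, with eigenvalue `Δ_{j,t}`. Indeed `C_t` is the composition of
the inclusion sum from `p`-sets to `t`-sets with its transpose, and each of the two multiplies
`v` by a scalar (`sum_above`, `sum_below`). Positive semidefiniteness therefore gives `μ ≥ 0`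
(`delta_mulVec_nonneg`).

Since `b = Δ⁻¹ μ = ∑_i μ_i Δ⁻¹ e_i`, the decomposition holds with `λ_i = μ_i c_i`, where
`c_i = ⟨η, Δ⁻¹ e_i⟩`, as soon as all `c_i` are positive; then `∑ λ_i = ⟨η, b⟩ = f(p)` is a
diagonal entry of `K`, so at most `1`. Positivity comes from the trace identity `mᵀ Δ = C(n,p) ηᵀ`
with `m_i = C(n,i) − C(n,i−1)` (`trace_sum`, proved by telescoping a Wilf–Zeilberger pair), which
gives `c_i = m_i / C(n,p) > 0` for `i ≤ p ≤ n/2`.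
-/

open scoped Classical

noncomputable section

/-- The matrix `Δ^p` (rows and columns indexed by `0,…,p`):
`Δ^p_{j,ℓ} = C(n−ℓ−j, p−ℓ)·C(p−j, ℓ−j)` if `j ≤ ℓ` and `0` otherwise. -/
def deltaMat (n p : ℕ) : Matrix (Fin (p + 1)) (Fin (p + 1)) ℝ :=
  fun j l =>
    if (j : ℕ) ≤ (l : ℕ) then
      (Nat.choose (n - (l : ℕ) - (j : ℕ)) (p - (l : ℕ)) : ℝ) *
        (Nat.choose (p - (j : ℕ)) ((l : ℕ) - (j : ℕ)) : ℝ)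
    else 0

/-- The vector `η^p` with `η^p_ℓ = C(p, ℓ)`. -/
def etaVec (p : ℕ) : Fin (p + 1) → ℝ := fun l => (Nat.choose p (l : ℕ) : ℝ)

/-- `β̄^{(i)} = (Δ^p)^{-1} e_i`. -/
def betaBar (n p : ℕ) (i : Fin (p + 1)) : Fin (p + 1) → ℝ :=
  (deltaMat n p)⁻¹.mulVec (Pi.single i 1)

/-- `β^{(i)} = β̄^{(i)} / ⟨η^p, β̄^{(i)}⟩`. -/
def betaVec (n p : ℕ) (i : Fin (p + 1)) : Fin (p + 1) → ℝ :=
  fun t => betaBar n p i t / (∑ l, etaVec p l * betaBar n p i l)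

/-- The `i`-th vertex kernel matrix `K_i(S,T) = ∑_t β^{(i)}_t · C(|S ∩ T|, t)`. -/
def vertexKernel (n p : ℕ) (i : Fin (p + 1)) :
    Matrix {S : Finset (Fin n) // S.card = p} {S : Finset (Fin n) // S.card = p} ℝ :=
  fun S T => ∑ t : Fin (p + 1), betaVec n p i t * (Nat.choose (S.1 ∩ T.1).card (t : ℕ) : ℝ)

/-! ### The trace identity -/

/-- `m_0 = 1` and `m_i = C(n,i) − C(n,i−1)`: for `i ≤ p ≤ n/2`, the dimension of the `i`-th
irreducible constituent of the functions on `p`-subsets of an `n`-set. -/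
def mult (n : ℕ) : ℕ → ℝ
  | 0 => 1
  | i + 1 => (Nat.choose n (i + 1) : ℝ) - (Nat.choose n i : ℝ)

lemma mult_pos (n i : ℕ) (h : 2 * i ≤ n) : 0 < mult n i := by
  cases i with
  | zero => simp [mult]
  | succ i =>
    have h1 : (Nat.choose n (i + 1) : ℝ) * (i + 1) = Nat.choose n i * (n - i) := by
      have := Nat.choose_succ_right_eq n i
      have h2 : ((n - i : ℕ) : ℝ) = n - i := by rw [Nat.cast_sub (by omega)]
      rw [← h2]; exact_mod_cast this
    have h3 : (0 : ℝ) < Nat.choose n i := by exact_mod_cast Nat.choose_pos (by omega)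
    have h4 : (2 * (i + 1) : ℝ) ≤ n := by exact_mod_cast h
    simp only [mult]
    nlinarith

lemma choose_succ_right_real {N k d : ℕ} (h : N = k + d) :
    (Nat.choose N (k + 1) : ℝ) * (k + 1) = Nat.choose N k * d := by
  have := Nat.choose_succ_right_eq N k
  rw [show N - k = d by omega] at this
  exact_mod_cast this

lemma succ_choose_real (N k : ℕ) :
    (Nat.choose (N + 1) (k + 1) : ℝ) * (k + 1) = (N + 1) * Nat.choose N k := by
  have := Nat.add_one_mul_choose_eq N k
  exact_mod_cast this.symm

/-- The entry `Δ^p_{i,l}` for `i ≤ l`, with natural-number indices; for `i > l` the truncated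
subtractions make it meaningless, and it is only summed over `i ≤ l`. -/
def dEnt (n p i l : ℕ) : ℝ := (Nat.choose (n - l - i) (p - l) : ℝ) * Nat.choose (p - i) (l - i)

/-- Partial sums over `i ≤ k` of `(l+1)·m_i Δ_{i,l+1} − (p−l)·m_i Δ_{i,l}` have a closed form
(a Wilf–Zeilberger pair), so that the dependence of `∑ m_i Δ_{i,l}` on `l` telescopes. -/
lemma partial_sum (n p l : ℕ) (hl : l + 1 ≤ p) (hpn : 2 * p ≤ n) (k : ℕ) (hk : k ≤ l) :
    ∑ i ∈ Finset.range (k + 1),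
      ((l + 1 : ℝ) * (mult n i * dEnt n p i (l + 1)) - (p - l : ℝ) * (mult n i * dEnt n p i l))
    = -((p - l : ℝ) * Nat.choose n k * Nat.choose (n - l - k - 1) (p - l)
        * Nat.choose (p - k) (l - k)) := by
  induction k with
  | zero =>
    obtain ⟨q, rfl⟩ := Nat.exists_eq_add_of_le hl
    obtain ⟨r, rfl⟩ := Nat.exists_eq_add_of_le hpn
    have e1 : 2 * (l + 1 + q) + r - (l + 1) = l + 2 * q + r + 1 := by omega
    have e2 : 2 * (l + 1 + q) + r - l = l + 2 * q + r + 2 := by omega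
    have e3 : l + 1 + q - (l + 1) = q := by omega
    have e4 : l + 1 + q - l = q + 1 := by omega
    simp only [zero_add, Finset.sum_range_one, mult, dEnt, Nat.sub_zero, e1, e2, e3, e4,
      Nat.choose_zero_right]
    have h1 := @choose_succ_right_real (l + 1 + q) l (q + 1) (by ring)
    have h2 : (Nat.choose (l + 2 * q + r + 2) (q + 1) : ℝ)
        = Nat.choose (l + 2 * q + r + 1) q + Nat.choose (l + 2 * q + r + 1) (q + 1) := by
      exact_mod_cast Nat.choose_succ_succ (l + 2 * q + r + 1) q
    rw [h2]
    push_cast at h1 ⊢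
    linear_combination (Nat.choose (l + 2 * q + r + 1) q : ℝ) * h1
  | succ k ih =>
    rw [Finset.sum_range_succ, ih (by omega)]
    obtain ⟨a, rfl⟩ := Nat.exists_eq_add_of_le hk
    obtain ⟨q, rfl⟩ := Nat.exists_eq_add_of_le hl
    obtain ⟨r, rfl⟩ := Nat.exists_eq_add_of_le hpn
    have e1 : 2 * (k + 1 + a + 1 + q) + r - (k + 1 + a + 1) - (k + 1) = a + 2 * q + r + 1 := by
      omega
    have e2 : 2 * (k + 1 + a + 1 + q) + r - (k + 1 + a) - (k + 1) = a + 2 * q + r + 1 + 1 := by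
      omega
    have e2' : 2 * (k + 1 + a + 1 + q) + r - (k + 1 + a) - k - 1 = a + 2 * q + r + 1 + 1 := by
      omega
    have e3 : k + 1 + a + 1 + q - (k + 1 + a + 1) = q := by omega
    have e4 : k + 1 + a + 1 + q - (k + 1 + a) = q + 1 := by omega
    have e5 : a + 2 * q + r + 1 + 1 - 1 = a + 2 * q + r + 1 := by omega
    have e6 : k + 1 + a + 1 + q - (k + 1) = a + 1 + q := by omega
    have e7 : k + 1 + a + 1 - (k + 1) = a + 1 := by omega
    have e8 : k + 1 + a - (k + 1) = a := by omega
    have e9 : k + 1 + a + 1 + q - k = a + 1 + q + 1 := by omega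
    have e10 : k + 1 + a - k = a + 1 := by omega
    simp only [mult, dEnt, e1, e2, e2', e3, e4, e5, e6, e7, e8, e9, e10]
    have h1 := succ_choose_real (a + 2 * q + r + 1) q
    have h2 := @choose_succ_right_real (a + 2 * q + r + 1) q (a + q + r + 1) (by ring)
    have h3 := @choose_succ_right_real (a + 1 + q) a (q + 1) (by ring)
    have h4 := succ_choose_real (a + 1 + q) a
    have h5 := @choose_succ_right_real (2 * (k + 1 + a + 1 + q) + r) k
      (k + 2 * a + 2 * q + r + 4) (by ring)
    push_cast at h1 h2 h3 h4 h5 ⊢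
    -- Every binomial coefficient becomes a rational multiple of one of three fixed ones.
    rw [← eq_div_iff (by positivity)] at h1 h2 h3 h4 h5
    rw [h1, h2, h3, h4, h5]
    field_simp
    ring

/-- The closed form for `i ≤ l` cancels against the one remaining term `i = l + 1`. -/
lemma step_sum (n p l : ℕ) (hl : l + 1 ≤ p) (hpn : 2 * p ≤ n) :
    (l + 1 : ℝ) * ∑ i ∈ Finset.range (l + 2), mult n i * dEnt n p i (l + 1)
      = (p - l : ℝ) * ∑ i ∈ Finset.range (l + 1), mult n i * dEnt n p i l := by
  have h := partial_sum n p l hl hpn l le_rfl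
  rw [Finset.sum_sub_distrib, ← Finset.mul_sum, ← Finset.mul_sum] at h
  rw [Finset.sum_range_succ, mul_add]
  suffices (l + 1 : ℝ) * (mult n (l + 1) * dEnt n p (l + 1) (l + 1)) =
    (p - l : ℝ) * Nat.choose n l * Nat.choose (n - l - l - 1) (p - l)
        * Nat.choose (p - l) (l - l) by linarith
  obtain ⟨q, rfl⟩ := Nat.exists_eq_add_of_le hl
  obtain ⟨r, rfl⟩ := Nat.exists_eq_add_of_le hpn
  have e1 : 2 * (l + 1 + q) + r - (l + 1) - (l + 1) = 2 * q + r := by omega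
  have e2 : 2 * (l + 1 + q) + r - l - l - 1 = 2 * q + r + 1 := by omega
  have e3 : l + 1 + q - (l + 1) = q := by omega
  have e4 : l + 1 + q - l = q + 1 := by omega
  simp only [mult, dEnt, e1, e2, e3, e4, Nat.sub_self, Nat.choose_zero_right]
  have h1 := succ_choose_real (2 * q + r) q
  have h5 := @choose_succ_right_real (2 * (l + 1 + q) + r) l (l + 2 * q + r + 2) (by ring)
  push_cast at h1 h5 ⊢
  rw [← eq_div_iff (by positivity)] at h1 h5
  rw [h1, h5]
  field_simp
  ring

/-- Both sides compute the trace of the matrix `C(|S ∩ T|, l)`: the left one from its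
eigenvalues `Δ_{i,l}` with multiplicities `m_i`, the right one from its diagonal. -/
lemma trace_sum (n p : ℕ) (hpn : 2 * p ≤ n) (l : ℕ) (hl : l ≤ p) :
    ∑ i ∈ Finset.range (l + 1), mult n i * dEnt n p i l = Nat.choose n p * Nat.choose p l := by
  induction l with
  | zero => simp [mult, dEnt]
  | succ l ih =>
    have h := step_sum n p l hl hpn
    rw [ih (by omega)] at h
    have h1 := @choose_succ_right_real p l (p - l) (by omega)
    rw [Nat.cast_sub (by omega)] at h1
    have : (l + 1 : ℝ) ≠ 0 := by positivity
    apply mul_left_cancel₀ this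
    linear_combination h - (Nat.choose n p : ℝ) * h1

lemma deltaMat_det (n p : ℕ) (hpn : 2 * p ≤ n) : IsUnit (deltaMat n p).det := by
  rw [Matrix.det_of_isUpperTriangular]
  · rw [isUnit_iff_ne_zero, Finset.prod_ne_zero_iff]
    intro i _
    have hi : (i : ℕ) ≤ p := by omega
    simp only [deltaMat, le_refl, if_true, Nat.sub_self, Nat.choose_zero_right, Nat.cast_one,
      mul_one]
    exact_mod_cast (Nat.choose_pos (by omega)).ne'
  · intro i j hij
    have : ¬ ((i : ℕ) ≤ (j : ℕ)) := not_le.mpr hij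
    simp [deltaMat, this]

/-- The trace identity `mᵀ Δ = C(n,p) ηᵀ`. -/
lemma mult_vecMul (n p : ℕ) (hpn : 2 * p ≤ n) :
    Matrix.vecMul (fun i : Fin (p + 1) => mult n i) (deltaMat n p)
      = (Nat.choose n p : ℝ) • etaVec p := by
  ext l
  have hl : (l : ℕ) ≤ p := by omega
  simp only [Matrix.vecMul, dotProduct, Pi.smul_apply, smul_eq_mul, etaVec]
  rw [← trace_sum n p hpn l hl]
  have : ∀ i : Fin (p + 1), mult n i * deltaMat n p i l
      = (fun i : ℕ => if i ≤ (l : ℕ) then mult n i * dEnt n p i l else 0) i := by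
    intro i
    simp only [deltaMat, dEnt]
    split_ifs <;> simp
  rw [Finset.sum_congr rfl (fun i _ => this i),
    Fin.sum_univ_eq_sum_range (fun i : ℕ => if i ≤ (l : ℕ) then mult n i * dEnt n p i l else 0),
    ← Finset.sum_filter]
  apply Finset.sum_congr _ (fun _ _ => rfl)
  ext i
  simp only [Finset.mem_filter, Finset.mem_range]
  omega

/-- The normalising constant `⟨η^p, Δ⁻¹ e_i⟩` is `m_i / C(n,p)`, hence positive. -/
lemma eta_betaBar (n p : ℕ) (hpn : 2 * p ≤ n) (i : Fin (p + 1)) :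
    ∑ l, etaVec p l * betaBar n p i l = mult n i / Nat.choose n p := by
  have hc : (Nat.choose n p : ℝ) ≠ 0 := by
    exact_mod_cast (Nat.choose_pos (by omega)).ne'
  have h := congrArg (fun w => Matrix.vecMul w (deltaMat n p)⁻¹ i) (mult_vecMul n p hpn)
  simp only [Matrix.vecMul_vecMul, Matrix.mul_nonsing_inv _ (deltaMat_det n p hpn),
    Matrix.vecMul_one, Matrix.smul_vecMul, Pi.smul_apply, smul_eq_mul] at h
  rw [h, mul_div_cancel_left₀ _ hc]
  simp [betaBar, Matrix.vecMul, dotProduct]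

/-! ### Eigenvectors of set-symmetric matrices -/

/-- The function `S ↦ ∏_k (1[x_k ∈ S] − 1[y_k ∈ S])` on finite sets. For `j` disjoint pairs
`{x_k, y_k}` its restriction to `p`-subsets lies in the `j`-th irreducible constituent. It is
defined on subsets of every size, so that inclusion sums between levels can be compared. -/
def pairVec {n j : ℕ} (x y : Fin j → Fin n) (S : Finset (Fin n)) : ℝ :=
  ∏ k, ((if x k ∈ S then 1 else 0) - (if y k ∈ S then 1 else 0))

lemma pairVec_compl {n j : ℕ} (x y : Fin j → Fin n) (S : Finset (Fin n)) :
    pairVec x y Sᶜ = (-1) ^ j * pairVec x y S := by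
  have : ((-1 : ℝ)) ^ j = ∏ _k : Fin j, (-1 : ℝ) := by simp
  rw [pairVec, pairVec, this, ← Finset.prod_mul_distrib]
  refine Finset.prod_congr rfl fun k _ => ?_
  by_cases h1 : x k ∈ S <;> by_cases h2 : y k ∈ S <;> simp [h1, h2]

lemma pairVec_swap {n j : ℕ} {x y : Fin j → Fin n} (hx : Function.Injective x)
    (hy : Function.Injective y) (hxy : ∀ k l, x k ≠ y l) (k : Fin j) (S : Finset (Fin n)) :
    pairVec x y ((Equiv.swap (x k) (y k)).finsetCongr S) = - pairVec x y S := by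
  simp only [pairVec, Equiv.finsetCongr_apply, Finset.mem_map_equiv, Equiv.symm_swap]
  rw [← Finset.mul_prod_erase Finset.univ _ (Finset.mem_univ k),
    ← Finset.mul_prod_erase Finset.univ (fun l => ((if x l ∈ S then (1 : ℝ) else 0)
      - (if y l ∈ S then 1 else 0))) (Finset.mem_univ k), ← neg_mul]
  congr 1
  · simp
  · refine Finset.prod_congr rfl fun l hl => ?_
    have hlk : l ≠ k := Finset.ne_of_mem_erase hl
    rw [Equiv.swap_apply_of_ne_of_ne (hx.ne hlk) (hxy l k),
      Equiv.swap_apply_of_ne_of_ne (hxy k l).symm (hy.ne hlk)]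

/-- The product vanishes at a set that meets some pair in zero or in two points. -/
lemma pairVec_eq_zero {n j : ℕ} {x y : Fin j → Fin n} {k : Fin j} {S : Finset (Fin n)}
    (h : x k ∈ S ↔ y k ∈ S) : pairVec x y S = 0 := by
  apply Finset.prod_eq_zero (Finset.mem_univ k)
  simp [h]

lemma card_between {n : ℕ} (A B : Finset (Fin n)) (hAB : Disjoint A B) (p : ℕ)
    (hp : A.card ≤ p) :
    (Finset.univ.filter fun S : Finset (Fin n) => S.card = p ∧ A ⊆ S ∧ Disjoint S B).card
      = Nat.choose (n - B.card - A.card) (p - A.card) := by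
  have hc : ((A ∪ B)ᶜ).card = n - B.card - A.card := by
    rw [Finset.card_compl, Finset.card_union_of_disjoint hAB, Fintype.card_fin]; omega
  rw [← hc, ← Finset.card_powersetCard]
  refine Finset.card_nbij' (fun S => S \ A) (fun U => U ∪ A) ?_ ?_ ?_ ?_
  · intro S hS
    simp only [Finset.coe_filter, Finset.mem_univ, true_and, Set.mem_ofPred_eq] at hS
    obtain ⟨h1, h2, h3⟩ := hS
    rw [Finset.mem_coe, Finset.mem_powersetCard, Finset.card_sdiff_of_subset h2, h1]
    refine ⟨fun a ha => ?_, rfl⟩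
    rw [Finset.mem_sdiff] at ha
    simp only [Finset.mem_compl, Finset.mem_union, not_or]
    exact ⟨ha.2, Finset.disjoint_left.mp h3 ha.1⟩
  · intro U hU
    rw [Finset.mem_coe, Finset.mem_powersetCard] at hU
    obtain ⟨h1, h2⟩ := hU
    have hUA : Disjoint U A := Finset.disjoint_left.mpr fun a ha hA => by
      have := h1 ha
      simp [hA] at this
    have hUB : Disjoint U B := Finset.disjoint_left.mpr fun a ha hA => by
      have := h1 ha
      simp [hA] at this
    simp only [Finset.coe_filter, Finset.mem_univ, true_and, Set.mem_ofPred_eq]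
    refine ⟨?_, Finset.subset_union_right, Finset.disjoint_union_left.mpr ⟨hUB, hAB⟩⟩
    rw [Finset.card_union_of_disjoint hUA, h2]; omega
  · intro S hS
    simp only [Finset.coe_filter, Finset.mem_univ, true_and, Set.mem_ofPred_eq] at hS
    exact Finset.sdiff_union_of_subset hS.2.1
  · intro U hU
    rw [Finset.mem_coe, Finset.mem_powersetCard] at hU
    have hUA : Disjoint U A := Finset.disjoint_left.mpr fun a ha hA => by
      have := hU.1 ha
      simp [hA] at this
    exact Finset.union_sdiff_cancel_right hUA

/-- Summing over the `p`-sets above `A` multiplies the pair function by a scalar. If `A` contains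
both or neither of some `x_k, y_k`, both sides vanish (in the latter case by the swap of `x_k`
and `y_k`); otherwise only the `S ⊇ A` avoiding the partners of the points of `A` contribute. -/
lemma sum_above {n j : ℕ} {x y : Fin j → Fin n} (hx : Function.Injective x)
    (hy : Function.Injective y) (hxy : ∀ k l, x k ≠ y l) (p : ℕ) (A : Finset (Fin n))
    (hA : A.card ≤ p) :
    ∑ S : Finset (Fin n) with S.card = p ∧ A ⊆ S, pairVec x y S
      = Nat.choose (n - j - A.card) (p - A.card) * pairVec x y A := by
  by_cases h : ∃ k, (x k ∈ A ↔ y k ∈ A)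
  · obtain ⟨k, hk⟩ := h
    rw [pairVec_eq_zero hk, mul_zero]
    by_cases hxA : x k ∈ A
    · refine Finset.sum_eq_zero fun S hS => ?_
      simp only [Finset.mem_filter, Finset.mem_univ, true_and] at hS
      exact pairVec_eq_zero (k := k) (iff_of_true (hS.2 hxA) (hS.2 (hk.mp hxA)))
    · have hyA : y k ∉ A := fun h => hxA (hk.mpr h)
      have key : ∑ S : Finset (Fin n) with S.card = p ∧ A ⊆ S, pairVec x y S
          = ∑ S : Finset (Fin n) with S.card = p ∧ A ⊆ S, - pairVec x y S := by
        refine Finset.sum_equiv (Equiv.swap (x k) (y k)).finsetCongr (fun S => ?_) (fun S _ => ?_)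
        · simp only [Finset.mem_filter, Finset.mem_univ, true_and, Equiv.finsetCongr_apply,
            Finset.card_map]
          refine and_congr_right fun _ => forall₂_congr fun a ha => ?_
          rw [Finset.mem_map_equiv, Equiv.symm_swap, Equiv.swap_apply_of_ne_of_ne]
          · rintro rfl; exact hxA ha
          · rintro rfl; exact hyA ha
        · rw [pairVec_swap hx hy hxy, neg_neg]
      rw [Finset.sum_neg_distrib] at key
      linarith
  · push Not at h
    have h' : ∀ k, (x k ∈ A ∧ y k ∉ A) ∨ (x k ∉ A ∧ y k ∈ A) := by
      intro k; have := h k; tauto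
    -- `z k` is the point of the `k`-th pair outside `A`, and `B` collects these points.
    set z : Fin j → Fin n := fun k => if x k ∈ A then y k else x k with hz
    have hzinj : Function.Injective z := by
      intro k l hkl
      simp only [hz] at hkl
      split_ifs at hkl
      · exact hy hkl
      · exact absurd hkl.symm (hxy _ _)
      · exact absurd hkl (hxy _ _)
      · exact hx hkl
    set B : Finset (Fin n) := Finset.univ.image z with hB
    have hBc : B.card = j := by
      rw [hB, Finset.card_image_of_injective _ hzinj, Finset.card_fin]
    have hAB : Disjoint A B := by
      rw [Finset.disjoint_right]
      intro b hb
      simp only [hB, Finset.mem_image, Finset.mem_univ, true_and] at hb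
      obtain ⟨k, rfl⟩ := hb
      rcases h' k with h1 | h1 <;> simp [hz, h1.1, h1.2]
    have hval : ∀ S : Finset (Fin n), A ⊆ S →
        pairVec x y S = if Disjoint S B then pairVec x y A else 0 := by
      intro S hS
      split_ifs with hd
      · refine Finset.prod_congr rfl fun k _ => ?_
        have hzk : z k ∉ S := Finset.disjoint_right.mp hd (Finset.mem_image_of_mem z (by simp))
        rcases h' k with h1 | h1
        · have := hS h1.1
          simp only [hz, h1.1, if_true] at hzk
          simp [h1, hzk, this]
        · have := hS h1.2
          simp only [hz, h1.1, if_false] at hzk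
          simp [h1, hzk, this]
      · rw [Finset.not_disjoint_iff] at hd
        obtain ⟨a, haS, haB⟩ := hd
        simp only [hB, Finset.mem_image, Finset.mem_univ, true_and] at haB
        obtain ⟨k, rfl⟩ := haB
        apply pairVec_eq_zero (k := k)
        rcases h' k with h1 | h1
        · simp only [hz, h1.1, if_true] at haS
          exact iff_of_true (hS h1.1) haS
        · simp only [hz, h1.1, if_false] at haS
          exact iff_of_true haS (hS h1.2)
    rw [Finset.sum_congr rfl (fun S hS => hval S (Finset.mem_filter.mp hS).2.2),
      ← Finset.sum_filter, Finset.sum_const, Finset.filter_filter, nsmul_eq_mul]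
    simp only [and_assoc]
    rw [card_between A B hAB p hA, hBc]

/-- Summing over the `t`-sets below `S` multiplies the pair function by a scalar. This is
`sum_above` for complements. -/
lemma sum_below {n j : ℕ} {x y : Fin j → Fin n} (hx : Function.Injective x)
    (hy : Function.Injective y) (hxy : ∀ k l, x k ≠ y l) (t : ℕ) (S : Finset (Fin n))
    (ht : t ≤ S.card) :
    ∑ A : Finset (Fin n) with A.card = t ∧ A ⊆ S, pairVec x y A
      = Nat.choose (S.card - j) (S.card - t) * pairVec x y S := by
  have hSn : S.card ≤ n := by simpa using Finset.card_le_univ S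
  have hc : Sᶜ.card = n - S.card := by simp [Finset.card_compl]
  have h := sum_above hx hy hxy (n - t) Sᶜ (by omega)
  rw [pairVec_compl, hc, show n - j - (n - S.card) = S.card - j by omega,
    show n - t - (n - S.card) = S.card - t by omega] at h
  have h2 : ∑ A : Finset (Fin n) with A.card = t ∧ A ⊆ S, pairVec x y A
      = ∑ A : Finset (Fin n) with A.card = n - t ∧ Sᶜ ⊆ A, (-1) ^ j * pairVec x y A := by
    refine Finset.sum_equiv (compl_involutive (α := Finset (Fin n))).toPerm (fun A => ?_) (fun A _ => ?_)
    · have hAn : A.card ≤ n := by simpa using Finset.card_le_univ A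
      simp only [Finset.mem_filter, Finset.mem_univ, true_and, Function.Involutive.coe_toPerm,
        Finset.card_compl, Fintype.card_fin, Finset.compl_subset_compl]
      refine and_congr_left fun _ => ?_
      omega
    · have hs : ((-1 : ℝ) ^ j) * (-1) ^ j = 1 := by rw [← mul_pow]; simp
      rw [Function.Involutive.coe_toPerm, pairVec_compl, ← mul_assoc, hs, one_mul]
  have hs : ((-1 : ℝ) ^ j) * (-1) ^ j = 1 := by rw [← mul_pow]; simp
  rw [h2, ← Finset.mul_sum, h]
  linear_combination (Nat.choose (S.card - j) (S.card - t) : ℝ) * pairVec x y S * hs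

/-- `C(|S ∩ T|, t)` counts the `t`-sets contained in both `S` and `T`. -/
lemma choose_inter_eq {n : ℕ} (S T : Finset (Fin n)) (t : ℕ) :
    (Nat.choose (S ∩ T).card t : ℝ) = ∑ A : Finset (Fin n) with A.card = t,
      (if A ⊆ S then 1 else 0) * (if A ⊆ T then 1 else 0) := by
  rw [← Finset.card_powersetCard, Finset.card_eq_sum_ones, Nat.cast_sum]
  simp only [← ite_and, mul_ite, mul_one, mul_zero]
  rw [← Finset.sum_filter, Finset.filter_filter]
  simp only [Nat.cast_one]
  refine Finset.sum_congr ?_ fun _ _ => rfl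
  ext A
  simp only [Finset.mem_powersetCard, Finset.mem_filter, Finset.mem_univ, true_and,
    Finset.subset_inter_iff]
  tauto

/-- The pair function is an eigenvector of `C(|S ∩ T|, t)`, with eigenvalue `Δ_{j,t}` (the
binomials are written so that the eigenvalue is `0` for `t < j`), which gives the value of the
quadratic form. -/
lemma quad_choose {n j : ℕ} {x y : Fin j → Fin n} (hx : Function.Injective x)
    (hy : Function.Injective y) (hxy : ∀ k l, x k ≠ y l) (p t : ℕ) (ht : t ≤ p) :
    ∑ S : Finset (Fin n) with S.card = p, ∑ T : Finset (Fin n) with T.card = p,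
      pairVec x y S * Nat.choose (S ∩ T).card t * pairVec x y T
    = (Nat.choose (n - j - t) (p - t) * Nat.choose (p - j) (p - t) : ℝ) *
      ∑ S : Finset (Fin n) with S.card = p, pairVec x y S ^ 2 := by
  have hrow : ∀ S : Finset (Fin n), S.card = p →
      ∑ T : Finset (Fin n) with T.card = p, (Nat.choose (S ∩ T).card t : ℝ) * pairVec x y T
      = (Nat.choose (n - j - t) (p - t) * Nat.choose (p - j) (p - t) : ℝ) * pairVec x y S := by
    intro S hS
    simp only [choose_inter_eq, Finset.sum_mul]
    rw [Finset.sum_comm]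
    have : ∀ A ∈ Finset.univ.filter (fun A : Finset (Fin n) => A.card = t),
        ∑ T : Finset (Fin n) with T.card = p,
          ((if A ⊆ S then (1 : ℝ) else 0) * (if A ⊆ T then 1 else 0)) * pairVec x y T
        = if A ⊆ S then Nat.choose (n - j - t) (p - t) * pairVec x y A else 0 := by
      intro A hA
      have hA' : A.card = t := (Finset.mem_filter.mp hA).2
      split_ifs with hAS
      · have := sum_above hx hy hxy p A (by omega)
        rw [hA'] at this
        rw [← this]
        simp only [one_mul, ite_mul, zero_mul]
        rw [← Finset.sum_filter, Finset.filter_filter]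
      · simp
    rw [Finset.sum_congr rfl this, ← Finset.sum_filter, Finset.filter_filter, ← Finset.mul_sum,
      sum_below hx hy hxy t S (by omega), hS, mul_assoc]
  rw [Finset.mul_sum]
  refine Finset.sum_congr rfl fun S hS => ?_
  simp only [mul_assoc]
  rw [← Finset.mul_sum, hrow S (Finset.mem_filter.mp hS).2]
  ring

/-- For `j ≤ p ≤ n/2` there are `j` disjoint pairs whose pair function is not identically zero on
`p`-sets: take `x_k = k` and `y_k = p + k`, and evaluate at `{0, …, p−1}`. -/
lemma exists_pairs (n p j : ℕ) (hj : j ≤ p) (hpn : 2 * p ≤ n) :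
    ∃ x y : Fin j → Fin n, Function.Injective x ∧ Function.Injective y ∧ (∀ k l, x k ≠ y l) ∧
      0 < ∑ S : Finset (Fin n) with S.card = p, pairVec x y S ^ 2 := by
  refine ⟨fun k => ⟨k, by omega⟩, fun k => ⟨p + k, by omega⟩, ?_, ?_, ?_, ?_⟩
  · intro k l h; simpa [Fin.ext_iff] using h
  · intro k l h; simpa [Fin.ext_iff] using h
  · intro k l h
    simp only [Fin.mk.injEq] at h; omega
  · refine Finset.sum_pos' (fun _ _ => sq_nonneg _)
      ⟨Finset.univ.image (Fin.castLE (show p ≤ n by omega)), ?_, ?_⟩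
    · simp [Finset.card_image_of_injective _ (Fin.castLE_injective _)]
    · apply pow_pos
      rw [pairVec]
      apply Finset.prod_pos
      intro k _
      have h1 : (⟨k, by omega⟩ : Fin n) ∈ Finset.univ.image (Fin.castLE (show p ≤ n by omega)) :=
        Finset.mem_image.mpr ⟨⟨k, by omega⟩, Finset.mem_univ _, rfl⟩
      have h2 : (⟨p + k, by omega⟩ : Fin n) ∉
          Finset.univ.image (Fin.castLE (show p ≤ n by omega)) := by
        intro h
        obtain ⟨i, _, hi⟩ := Finset.mem_image.mp h
        have := congrArg Fin.val hi
        simp at this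
        omega
      rw [if_pos h1, if_neg h2]; norm_num

/-! ### Proof of the decomposition -/

/-- The eigenvalues `(Δ b)_j` of a positive semidefinite `K = ∑_t b_t C(|S ∩ T|, t)` are
nonnegative. -/
lemma delta_mulVec_nonneg (n p : ℕ) (hpn : 2 * p ≤ n) (b : Fin (p + 1) → ℝ)
    (K : Matrix {S : Finset (Fin n) // S.card = p} {S : Finset (Fin n) // S.card = p} ℝ)
    (hK : ∀ S T, K S T = ∑ t, b t * (Nat.choose (S.1 ∩ T.1).card (t : ℕ) : ℝ))
    (hpsd : K.PosSemidef) (j : Fin (p + 1)) : 0 ≤ (deltaMat n p).mulVec b j := by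
  obtain ⟨x, y, hx, hy, hxy, hpos⟩ := exists_pairs n p j (by omega) hpn
  have h := hpsd.dotProduct_mulVec_nonneg (fun S => pairVec x y S.1)
  have hq : star (fun S : {S : Finset (Fin n) // S.card = p} => pairVec x y S.1) ⬝ᵥ
      K.mulVec (fun S => pairVec x y S.1) = (deltaMat n p).mulVec b j *
        ∑ S : Finset (Fin n) with S.card = p, pairVec x y S ^ 2 := by
    have hsub : ∀ g : Finset (Fin n) → ℝ, ∑ S : {S : Finset (Fin n) // S.card = p}, g S.1
        = ∑ S : Finset (Fin n) with S.card = p, g S := fun g =>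
      (Finset.sum_subtype _ (by simp) g).symm
    have hent : ∀ t : Fin (p + 1), deltaMat n p j t
        = Nat.choose (n - j - t) (p - t) * Nat.choose (p - j) (p - t) := by
      intro t
      have ht : (t : ℕ) ≤ p := by omega
      rw [deltaMat]
      split_ifs with hjt
      · rw [Nat.sub_right_comm, ← Nat.choose_symm (show (t - j : ℕ) ≤ p - j by omega),
          show p - (j : ℕ) - (t - j) = p - t by omega]
      · rw [Nat.choose_eq_zero_of_lt (show p - (j : ℕ) < p - t by omega)]; simp
    have hquad : ∀ t : Fin (p + 1), ∑ S : {S : Finset (Fin n) // S.card = p},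
        ∑ T : {S : Finset (Fin n) // S.card = p},
          pairVec x y S.1 * Nat.choose (S.1 ∩ T.1).card t * pairVec x y T.1
        = deltaMat n p j t * ∑ S : Finset (Fin n) with S.card = p, pairVec x y S ^ 2 := by
      intro t
      rw [hent, ← quad_choose hx hy hxy p t (by omega), ← hsub (fun S => _)]
      exact Finset.sum_congr rfl fun S _ =>
        hsub (fun T => pairVec x y S.1 * Nat.choose (S.1 ∩ T).card t * pairVec x y T)
    simp only [dotProduct, Matrix.mulVec, hK, Pi.star_apply, star_trivial]
    rw [Finset.sum_mul]
    simp only [mul_right_comm _ (b _) _, ← hquad]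
    simp only [Finset.sum_mul, Finset.mul_sum]
    rw [Finset.sum_comm (s := (Finset.univ : Finset (Fin (p + 1))))]
    refine Finset.sum_congr rfl fun S _ => ?_
    rw [Finset.sum_comm (s := (Finset.univ : Finset (Fin (p + 1))))]
    refine Finset.sum_congr rfl fun T _ => Finset.sum_congr rfl fun t _ => ?_
    ring
  rw [hq] at h
  exact nonneg_of_mul_nonneg_left h hpos

/-- Newton's forward difference formula: the `b_t` are the iterated differences of `f` at `0`. -/
lemma exists_binomial (f : ℕ → ℝ) (p : ℕ) :
    ∃ b : Fin (p + 1) → ℝ, ∀ k ≤ p, f k = ∑ t, b t * (Nat.choose k (t : ℕ) : ℝ) := by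
  refine ⟨fun t => (fwdDiff 1)^[(t : ℕ)] f 0, fun k hk => ?_⟩
  have h := shift_eq_sum_fwdDiff_iter (1 : ℕ) f k 0
  simp only [zero_add, smul_eq_mul, mul_one, nsmul_eq_mul] at h
  rw [h, Fin.sum_univ_eq_sum_range (fun t => (fwdDiff 1)^[t] f 0 * (Nat.choose k t : ℝ))]
  simp only [mul_comm]
  refine Finset.sum_subset (fun i hi => ?_) (fun i _ hi => ?_)
  · simp only [Finset.mem_range] at hi ⊢; omega
  · simp only [Finset.mem_range] at hi
    rw [Nat.choose_eq_zero_of_lt (by omega)]; simp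

/-- Every set-symmetric PSD matrix with diagonal at most `1` is a sub-convex combination of
the `p+1` vertex kernels. -/
theorem statement7 (n p : ℕ) (hp : 1 ≤ p) (hpn : 2 * p ≤ n) (f : ℕ → ℝ)
    (K : Matrix {S : Finset (Fin n) // S.card = p} {S : Finset (Fin n) // S.card = p} ℝ)
    (hK : ∀ S T, K S T = f (S.1 ∩ T.1).card)
    (hpsd : K.PosSemidef) (hdiag : ∀ S, K S S ≤ 1) :
    ∃ lam : Fin (p + 1) → ℝ,
      (∀ i, 0 ≤ lam i) ∧ (∑ i, lam i ≤ 1) ∧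
      K = ∑ i, lam i • vertexKernel n p i := by
  obtain ⟨b, hb⟩ := exists_binomial f p
  have hKb : ∀ S T, K S T = ∑ t, b t * (Nat.choose (S.1 ∩ T.1).card (t : ℕ) : ℝ) := fun S T => by
    rw [hK, hb _ ((Finset.card_le_card Finset.inter_subset_left).trans S.2.le)]
  set mu := (deltaMat n p).mulVec b with hmu
  have hmu0 : ∀ i, 0 ≤ mu i := delta_mulVec_nonneg n p hpn b K hKb hpsd
  have hc : ∀ i : Fin (p + 1), 0 < ∑ l, etaVec p l * betaBar n p i l := fun i => by
    rw [eta_betaBar n p hpn i]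
    exact div_pos (mult_pos n i (by omega)) (by exact_mod_cast Nat.choose_pos (by omega))
  have hbmu : ∀ t, ∑ i, mu i * betaBar n p i t = b t := fun t => by
    have h : (deltaMat n p)⁻¹.mulVec mu = b := by
      rw [hmu, Matrix.mulVec_mulVec, Matrix.nonsing_inv_mul _ (deltaMat_det n p hpn),
        Matrix.one_mulVec]
    conv_rhs => rw [← h]
    simp [betaBar, Matrix.mulVec, dotProduct, Pi.single_apply, mul_comm]
  refine ⟨fun i => mu i * ∑ l, etaVec p l * betaBar n p i l,
    fun i => mul_nonneg (hmu0 i) (hc i).le, ?_, ?_⟩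
  · obtain ⟨S, -, hS⟩ := Finset.exists_subset_card_eq
      (show p ≤ (Finset.univ : Finset (Fin n)).card by simp; omega)
    have h := hdiag ⟨S, hS⟩
    rw [hKb] at h
    refine le_trans (le_of_eq ?_) h
    simp only [Finset.inter_self, hS, ← hbmu, Finset.mul_sum, Finset.sum_mul, etaVec]
    rw [Finset.sum_comm]
    exact Finset.sum_congr rfl fun _ _ => Finset.sum_congr rfl fun _ _ => by ring
  · ext S T
    simp only [Matrix.sum_apply, Matrix.smul_apply, smul_eq_mul, vertexKernel, betaVec]
    rw [hKb]
    simp only [← hbmu, Finset.sum_mul]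
    rw [Finset.sum_comm]
    refine Finset.sum_congr rfl fun i _ => ?_
    rw [Finset.mul_sum]
    refine Finset.sum_congr rfl fun t _ => ?_
    have := (hc i).ne'
    generalize (∑ l, etaVec p l * betaBar n p i l) = c at this ⊢
    field_simp
end
end

section
/- For every function f : ℕ → ℝ with f(n)/√n → 0 as n → ∞, there exists N such that for every n ≥ N there exist p ∈ {0,…,n} and a subset I ⊆ {1,…,n} such that for every real inner product space H, every layer-Euclidean embedding φ : S_{p,n} → H, and every w ∈ H with ‖w‖ ≤ 2^{f(n)}, there exists x ∈ S_{p,n} with | c_I(x) − ⟨w, φ(x)⟩ | > 1/6. (No fixed Euclidean kernel uniformly approximates all conjunctions on some layer with margin 2^{o(√n)}.) -/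
/-!
A copy of the cube `{±1}^N` with `N = ⌊n/2⌋` sits in the layer `p = N` (`layerPoint`), and the inner
product of two points of the layer is there an affine function of `∑ i, x_i y_i`. So the embedding
restricts to a map `Φ` on the cube whose kernel is invariant under coordinate flips and coordinate
permutations: its Fourier coefficients `walshCoeff Φ S` are pairwise orthogonal, have a norm
depending only on `|S|`, and by Parseval have squared norms summing to at most `1`.

Let `I` consist of `m = ⌊N/4⌋` cube variables and let `e(t)` be the mean of `Φ` when each coordinate
in `I` is `-1` with probability `t`, independently, and the others are uniform. Then
`e(t) = ∑_{S ⊆ I} (1 - 2t)^{|S|} walshCoeff Φ S` (`sum_dens_smul`). If a linear functional `D` on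
functions of `t` kills the polynomials of degree at most `s`, only the levels `k > s` contribute to
`D e`. There, `C(m, k) ≤ 4^{-k} C(N, k)`, whence `‖D e‖ = O(2^{-s})` (`norm_sq_le`).

On the other hand `⟪w, e(t)⟫` is within `1/6` of the mean `2 (1 - t)^m - 1` of the conjunction,
which is `1` at `t = 0` and close to `-1` for `t ≥ τ = 9 / m`. The functional `D` is built from the
`2s`-th central finite difference of `(q(4 y² τ) - q(τ)) / (4 y² - 1)` at integers `y` (`wt`, `node`,
`sum_wt_eq_zero`); up to sign it is `q(0) - q(τ)` plus a combination of differences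
`q(4 y² τ) - q(τ)`, `y ≠ 0`, with weights of total mass at most `1` (`sum_abs_wt_le`). Hence
`|D ⟪w, e⟫|` is bounded below by a constant, and `‖w‖` is at least a constant times `2^s`
(`cube_bound`). The nodes stay in `[0, 1]` as long as `36 s² ≤ m`, which allows `s` of order `√n`.
-/

open scoped RealInnerProductSpace Classical

noncomputable section

/-- The `p`-th layer `S_{p,n}` of the hypercube: points of the cube with coordinate sum `p`. -/
def Layer (n p : ℕ) : Set (EuclideanSpace ℝ (Fin n)) :=
  {x | (∀ i, x i = 0 ∨ x i = 1) ∧ ∑ i, x i = (p : ℝ)}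

/-- A layer-Euclidean embedding of `S_{p,n}`: the inner products of embedded points depend only
on the inner product of the inputs, and embedded points have norm at most 1. -/
def IsLayerEuclideanEmbedding (n p : ℕ) {H : Type} [NormedAddCommGroup H]
    [InnerProductSpace ℝ H] (φ : EuclideanSpace ℝ (Fin n) → H) : Prop :=
  (∃ g : ℝ → ℝ, ∀ x ∈ Layer n p, ∀ y ∈ Layer n p, ⟪φ x, φ y⟫ = g ⟪x, y⟫) ∧
  ∀ x ∈ Layer n p, ⟪φ x, φ x⟫ ≤ 1

/-- The `±1`-valued conjunction `c_I`. -/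
def conj (n : ℕ) (I : Finset (Fin n)) (x : EuclideanSpace ℝ (Fin n)) : ℝ :=
  if ∀ i ∈ I, x i = 1 then 1 else -1


/-! ### Fourier analysis of isotropic embeddings of the cube -/

section Cube
variable {ι : Type}

/-- The Walsh character `χ_S(x) = ∏_{i ∈ S} x_i` on the cube `{±1}^ι`, whose points are encoded as
functions into `ℤˣ` so that the cube is a group under pointwise multiplication. -/
def chi (S : Finset ι) (x : ι → ℤˣ) : ℝ := ∏ i ∈ S, ((x i : ℤ) : ℝ)

lemma chi_mul (S : Finset ι) (x y : ι → ℤˣ) : chi S (x * y) = chi S x * chi S y := by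
  simp [chi, Finset.prod_mul_distrib]

variable [Fintype ι] {H : Type} [NormedAddCommGroup H] [InnerProductSpace ℝ H]

/-- The vector-valued Fourier coefficient `2^{-|ι|} ∑_x χ_S(x) Φ(x)`. -/
def walshCoeff (Φ : (ι → ℤˣ) → H) (S : Finset ι) : H :=
  ((2 : ℝ) ^ Fintype.card ι)⁻¹ • ∑ x, chi S x • Φ x

lemma inner_walshCoeff (Φ : (ι → ℤˣ) → H) (S T : Finset ι) :
    ⟪walshCoeff Φ S, walshCoeff Φ T⟫ = ((2 : ℝ) ^ Fintype.card ι)⁻¹ ^ 2 *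
      ∑ x, ∑ y, chi S x * chi T y * ⟪Φ x, Φ y⟫ := by
  simp only [walshCoeff, real_inner_smul_left, real_inner_smul_right, sum_inner, inner_sum,
    Finset.mul_sum]
  rw [Finset.sum_comm]
  refine Finset.sum_congr rfl fun x _ => Finset.sum_congr rfl fun y _ => ?_
  ring

/-- The kernel is invariant under simultaneous coordinate flips; flipping a coordinate in the
symmetric difference of `S` and `T` negates the double sum defining the inner product. -/
lemma walshCoeff_orthogonal {Φ : (ι → ℤˣ) → H} {G : ℝ → ℝ}
    (hG : ∀ x y, ⟪Φ x, Φ y⟫ = G (∑ i, ((x i : ℤ) : ℝ) * ((y i : ℤ) : ℝ)))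
    {S T : Finset ι} (hST : S ≠ T) : ⟪walshCoeff Φ S, walshCoeff Φ T⟫ = 0 := by
  obtain ⟨z, hz⟩ : ∃ z : ι → ℤˣ, chi S z * chi T z = -1 := by
    obtain ⟨i, hi⟩ : ∃ i, ¬ (i ∈ S ↔ i ∈ T) := by
      by_contra! h
      exact hST (Finset.ext h)
    refine ⟨Function.update 1 i (-1), ?_⟩
    have h : ∀ U : Finset ι, chi U (Function.update 1 i (-1)) = if i ∈ U then -1 else 1 := by
      intro U
      have : ∀ j, (((Function.update (1 : ι → ℤˣ) i (-1) j : ℤˣ) : ℤ) : ℝ)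
          = if i = j then -1 else 1 := by
        intro j
        by_cases hj : i = j
        · subst hj; simp
        · simp [Function.update_of_ne (Ne.symm hj), hj]
      simp only [chi, this, Finset.prod_ite_eq]
    rw [h, h]
    by_cases h1 : i ∈ S <;> by_cases h2 : i ∈ T <;> simp_all
  have key : ∑ x, ∑ y, chi S x * chi T y * ⟪Φ x, Φ y⟫
      = -∑ x, ∑ y, chi S x * chi T y * ⟪Φ x, Φ y⟫ := by
    simp only [← Finset.sum_neg_distrib]
    refine (Equiv.sum_comp (Equiv.mulRight z)
      (fun x => ∑ y, chi S x * chi T y * ⟪Φ x, Φ y⟫)).symm.trans ?_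
    refine Finset.sum_congr rfl fun x _ => ?_
    refine (Equiv.sum_comp (Equiv.mulRight z)
      (fun y => chi S (Equiv.mulRight z x) * chi T y * ⟪Φ (Equiv.mulRight z x), Φ y⟫)).symm.trans ?_
    refine Finset.sum_congr rfl fun y _ => ?_
    have hK : ⟪Φ (x * z), Φ (y * z)⟫ = ⟪Φ x, Φ y⟫ := by
      rw [hG, hG]
      congr 1
      refine Finset.sum_congr rfl fun i _ => ?_
      rcases Int.units_eq_one_or (z i) with h | h <;> simp [h]
    simp only [Equiv.coe_mulRight, chi_mul, hK]
    linear_combination (chi S x * chi T y * ⟪Φ x, Φ y⟫) * hz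
  rw [inner_walshCoeff]
  have : ∑ x, ∑ y, chi S x * chi T y * ⟪Φ x, Φ y⟫ = 0 := by linarith
  rw [this, mul_zero]

/-- The kernel is invariant under coordinate permutations, so the norm of a Fourier coefficient
depends only on its level. -/
lemma walshCoeff_norm_eq {Φ : (ι → ℤˣ) → H} {G : ℝ → ℝ}
    (hG : ∀ x y, ⟪Φ x, Φ y⟫ = G (∑ i, ((x i : ℤ) : ℝ) * ((y i : ℤ) : ℝ)))
    {S T : Finset ι} (hST : S.card = T.card) :
    ⟪walshCoeff Φ S, walshCoeff Φ S⟫ = ⟪walshCoeff Φ T, walshCoeff Φ T⟫ := by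
  obtain ⟨σ, hσ⟩ : ∃ σ : Equiv.Perm ι, S.map σ.toEmbedding = T := by
    let e : {i // i ∈ S} ≃ {i // i ∈ T} := Finset.equivOfCardEq hST
    refine ⟨e.extendSubtype, ?_⟩
    refine Finset.eq_of_subset_of_card_le ?_ (by simp [hST])
    intro j hj
    obtain ⟨i, hi, rfl⟩ := Finset.mem_map.1 hj
    exact e.extendSubtype_mem i hi
  have hchi : ∀ x : ι → ℤˣ, chi T x = chi S (x ∘ σ) := by
    intro x
    simp [chi, ← hσ, Finset.prod_map]
  rw [inner_walshCoeff, inner_walshCoeff]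
  congr 1
  let E : (ι → ℤˣ) ≃ (ι → ℤˣ) := σ.symm.arrowCongr (Equiv.refl _)
  have hE : ∀ x, E x = x ∘ σ := fun x => by ext i; simp [E]
  rw [← E.sum_comp (fun x => ∑ y, chi S x * chi S y * ⟪Φ x, Φ y⟫)]
  refine Finset.sum_congr rfl fun x _ => ?_
  rw [← E.sum_comp (fun y => chi S (E x) * chi S y * ⟪Φ (E x), Φ y⟫)]
  refine Finset.sum_congr rfl fun y _ => ?_
  have hK : ⟪Φ (x ∘ σ), Φ (y ∘ σ)⟫ = ⟪Φ x, Φ y⟫ := by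
    rw [hG, hG]
    congr 1
    exact Equiv.sum_comp σ (fun i => ((x i : ℤ) : ℝ) * ((y i : ℤ) : ℝ))
  rw [hE, hE, hchi, hchi, hK]

lemma sum_chi_mul (x y : ι → ℤˣ) :
    ∑ S : Finset ι, chi S x * chi S y = if x = y then (2 : ℝ) ^ Fintype.card ι else 0 := by
  have h : ∀ S : Finset ι, chi S x * chi S y = ∏ i ∈ S, ((x i : ℤ) : ℝ) * ((y i : ℤ) : ℝ) :=
    fun S => by simp [chi, Finset.prod_mul_distrib]
  simp only [h]
  rw [← Finset.powerset_univ, ← Finset.prod_one_add]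
  split_ifs with hxy
  · subst hxy
    have : ∀ i, (1 : ℝ) + ((x i : ℤ) : ℝ) * ((x i : ℤ) : ℝ) = 2 := by
      intro i
      rcases Int.units_eq_one_or (x i) with h | h <;> simp [h] <;> norm_num
    simp [this]
  · obtain ⟨i, hi⟩ := Function.ne_iff.1 hxy
    refine Finset.prod_eq_zero (Finset.mem_univ i) ?_
    rcases Int.units_eq_one_or (x i) with h | h <;>
      rcases Int.units_eq_one_or (y i) with h' | h' <;> simp_all

lemma parseval (Φ : (ι → ℤˣ) → H) :
    ∑ S, ⟪walshCoeff Φ S, walshCoeff Φ S⟫ = ((2 : ℝ) ^ Fintype.card ι)⁻¹ * ∑ x, ⟪Φ x, Φ x⟫ := by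
  simp only [inner_walshCoeff, ← Finset.mul_sum]
  rw [Finset.sum_comm]
  have : ∀ x, ∑ S : Finset ι, ∑ y, chi S x * chi S y * ⟪Φ x, Φ y⟫
      = (2 : ℝ) ^ Fintype.card ι * ⟪Φ x, Φ x⟫ := by
    intro x
    rw [Finset.sum_comm]
    simp only [← Finset.sum_mul, sum_chi_mul, ite_mul, zero_mul, Finset.sum_ite_eq,
      Finset.mem_univ, if_true]
  simp only [this, ← Finset.mul_sum]
  have h2 : (2 : ℝ) ^ Fintype.card ι ≠ 0 := by positivity
  field_simp

lemma sum_walshCoeff_le_one {Φ : (ι → ℤˣ) → H} (h1 : ∀ x, ⟪Φ x, Φ x⟫ ≤ 1) :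
    ∑ S, ⟪walshCoeff Φ S, walshCoeff Φ S⟫ ≤ 1 := by
  rw [parseval]
  have : ∑ x, ⟪Φ x, Φ x⟫ ≤ (2 : ℝ) ^ Fintype.card ι := by
    refine (Finset.sum_le_sum fun x _ => h1 x).trans ?_
    simp
  calc _ ≤ ((2 : ℝ) ^ Fintype.card ι)⁻¹ * (2 : ℝ) ^ Fintype.card ι := by gcongr
    _ = 1 := inv_mul_cancel₀ (by positivity)

/-- The density of the product measure on `{±1}^ι` whose coordinates in `I` equal `-1` with
probability `t` and whose other coordinates are uniform. -/
def dens (I : Finset ι) (t : ℝ) (x : ι → ℤˣ) : ℝ :=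
  ((2 : ℝ) ^ Fintype.card ι)⁻¹ * ∏ i ∈ I, (1 + (1 - 2 * t) * ((x i : ℤ) : ℝ))

/-- Averaging over the uniform coordinates outside `I` kills all characters not supported in `I`;
the rest are damped by `(1 - 2t)^{|S|}`, a polynomial in `t`. -/
lemma sum_dens_smul (Φ : (ι → ℤˣ) → H) (I : Finset ι) (t : ℝ) :
    ∑ x, dens I t x • Φ x = ∑ S ∈ I.powerset, (1 - 2 * t) ^ S.card • walshCoeff Φ S := by
  simp only [dens, walshCoeff, Finset.prod_one_add, Finset.prod_mul_distrib, Finset.prod_const,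
    Finset.smul_sum, smul_smul, Finset.mul_sum, Finset.sum_smul]
  rw [Finset.sum_comm]
  refine Finset.sum_congr rfl fun S _ => Finset.sum_congr rfl fun x _ => ?_
  congr 1
  rw [chi]; ring

lemma sum_prod_cube (I : Finset ι) (g : ℤˣ → ℝ) :
    ((2 : ℝ) ^ Fintype.card ι)⁻¹ * ∑ x : ι → ℤˣ, ∏ i ∈ I, g (x i)
      = ((g 1 + g (-1)) / 2) ^ I.card := by
  have h : ∀ x : ι → ℤˣ, ∏ i ∈ I, g (x i) = ∏ i, if i ∈ I then g (x i) else 1 := by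
    intro x; simp [Finset.prod_ite_mem]
  have h2 : ∑ x : ι → ℤˣ, ∏ i, (if i ∈ I then g (x i) else 1)
      = ∏ i, ∑ u : ℤˣ, (if i ∈ I then g u else 1) := by
    rw [Finset.prod_univ_sum (fun _ => Finset.univ) (fun i u => if i ∈ I then g u else 1),
      Fintype.piFinset_univ]
  have h3 : ∀ i, ∑ u : ℤˣ, (if i ∈ I then g u else 1)
      = 2 * (if i ∈ I then (g 1 + g (-1)) / 2 else 1) := by
    intro i
    have : (1 : ℤˣ) ≠ -1 := by decide
    rw [UnitsInt.univ, Finset.sum_pair this]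
    split_ifs
    · ring
    · norm_num
  simp only [h]
  rw [h2]
  simp only [h3, Finset.prod_mul_distrib, Finset.prod_const, Finset.card_univ]
  rw [← mul_assoc, inv_mul_cancel₀ (by positivity), one_mul]
  simp [div_pow]

lemma dens_nonneg (I : Finset ι) {t : ℝ} (h0 : 0 ≤ t) (h1 : t ≤ 1) (x : ι → ℤˣ) :
    0 ≤ dens I t x := by
  refine mul_nonneg (by positivity) (Finset.prod_nonneg fun i _ => ?_)
  rcases Int.units_eq_one_or (x i) with h | h <;> simp [h] <;> linarith

lemma sum_dens (I : Finset ι) (t : ℝ) : ∑ x, dens I t x = 1 := by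
  have := sum_prod_cube I (fun u => 1 + (1 - 2 * t) * ((u : ℤ) : ℝ))
  simp only [dens, ← Finset.mul_sum]
  rw [this]
  have : ((1 + (1 - 2 * t) * (((1 : ℤˣ) : ℤ) : ℝ)) + (1 + (1 - 2 * t) * (((-1 : ℤˣ) : ℤ) : ℝ))) / 2
    = 1 := by push_cast; ring
  rw [this, one_pow]

/-- The `±1`-valued conjunction on the cube `{±1}^ι`, with `1` standing for true. -/
def cubeConj (I : Finset ι) (x : ι → ℤˣ) : ℝ := if ∀ i ∈ I, x i = 1 then 1 else -1

lemma sum_dens_cubeConj (I : Finset ι) (t : ℝ) :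
    ∑ x, dens I t x * cubeConj I x = 2 * (1 - t) ^ I.card - 1 := by
  have h : ∀ x : ι → ℤˣ, dens I t x * cubeConj I x = 2 * (((2 : ℝ) ^ Fintype.card ι)⁻¹ *
      ∏ i ∈ I, (if x i = 1 then (1 + (1 - 2 * t) * ((x i : ℤ) : ℝ)) else 0)) - dens I t x := by
    intro x
    unfold cubeConj
    split_ifs with hx
    · rw [Finset.prod_congr rfl fun i hi => if_pos (hx i hi)]
      unfold dens; ring
    · push Not at hx
      obtain ⟨i, hi, hne⟩ := hx
      rw [Finset.prod_eq_zero hi (if_neg hne)]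
      ring
  simp only [h, Finset.sum_sub_distrib, sum_dens, ← Finset.mul_sum]
  rw [sum_prod_cube I (fun u => if u = 1 then (1 + (1 - 2 * t) * ((u : ℤ) : ℝ)) else 0)]
  have : (-1 : ℤˣ) ≠ 1 := by decide
  simp only [this, if_true, if_false]
  congr 3
  push_cast; ring

lemma choose_mul_pow_le {m N : ℕ} (h : m ≤ N) (k : ℕ) :
    m.choose k * N ^ k ≤ N.choose k * m ^ k := by
  have h1 : m.descFactorial k * N ^ k ≤ N.descFactorial k * m ^ k := by
    induction k with
    | zero => simp
    | succ k ih =>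
      rw [Nat.descFactorial_succ, Nat.descFactorial_succ, pow_succ, pow_succ]
      have : (m - k) * N ≤ (N - k) * m := by
        rw [Nat.sub_mul, Nat.sub_mul, mul_comm N m]
        have := Nat.mul_le_mul_left k h
        omega
      calc _ = ((m - k) * N) * (m.descFactorial k * N ^ k) := by ring
        _ ≤ ((N - k) * m) * (N.descFactorial k * m ^ k) := Nat.mul_le_mul this ih
        _ = _ := by ring
  rw [Nat.descFactorial_eq_factorial_mul_choose, Nat.descFactorial_eq_factorial_mul_choose,
    mul_assoc, mul_assoc] at h1
  exact Nat.le_of_mul_le_mul_left h1 (Nat.factorial_pos k)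

/-- Combinations of the low-dimensional family `S ⊆ I` of Fourier coefficients with no component
below level `d` are short. Parseval gives `∑_k C(|ι|, k) a_k ≤ 1` for the common squared norm `a_k`
of the level-`k` coefficients, while only `C(|I|, k) ≤ 4^{-k} C(|ι|, k)` of them are used. -/
lemma norm_sq_le {Φ : (ι → ℤˣ) → H} {G : ℝ → ℝ}
    (hG : ∀ x y, ⟪Φ x, Φ y⟫ = G (∑ i, ((x i : ℤ) : ℝ) * ((y i : ℤ) : ℝ)))
    (h1 : ∀ x, ⟪Φ x, Φ x⟫ ≤ 1) (I : Finset ι) (hI : 4 * I.card ≤ Fintype.card ι)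
    (D : ℕ → ℝ) (B : ℝ) (d : ℕ) (hD0 : ∀ k < d, D k = 0) (hDB : ∀ k, |D k| ≤ B) :
    ‖∑ S ∈ I.powerset, D S.card • walshCoeff Φ S‖ ^ 2 ≤ B ^ 2 * (1 / 4) ^ d := by
  obtain ⟨a, ha⟩ : ∃ a : ℕ → ℝ, ∀ S, ⟪walshCoeff Φ S, walshCoeff Φ S⟫ = a S.card := by
    refine ⟨fun k => if h : ∃ S : Finset ι, S.card = k then
      ⟪walshCoeff Φ h.choose, walshCoeff Φ h.choose⟫ else 0, fun S => ?_⟩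
    have h : ∃ T : Finset ι, T.card = S.card := ⟨S, rfl⟩
    simp only [dif_pos h]
    exact walshCoeff_norm_eq hG h.choose_spec.symm
  have hsum : ∑ k ∈ Finset.range (Fintype.card ι + 1), ((Fintype.card ι).choose k : ℝ) * a k ≤ 1 := by
    have := sum_walshCoeff_le_one h1
    simp only [ha] at this
    rw [← Finset.powerset_univ, Finset.sum_powerset_apply_card] at this
    simpa using this
  have ha0 : ∀ k ≤ Fintype.card ι, 0 ≤ a k := by
    intro k hk
    obtain ⟨S, -, rfl⟩ := Finset.exists_subset_card_eq (s := (Finset.univ : Finset ι)) hk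
    rw [← ha]; exact real_inner_self_nonneg
  have hnorm : ‖∑ S ∈ I.powerset, D S.card • walshCoeff Φ S‖ ^ 2
      = ∑ k ∈ Finset.range (I.card + 1), I.card.choose k * (D k ^ 2 * a k) := by
    rw [← real_inner_self_eq_norm_sq, sum_inner]
    have : ∀ S ∈ I.powerset, ⟪D S.card • walshCoeff Φ S, ∑ T ∈ I.powerset, D T.card • walshCoeff Φ T⟫
        = D S.card ^ 2 * a S.card := by
      intro S hS
      rw [inner_sum, Finset.sum_eq_single S]
      · rw [real_inner_smul_left, real_inner_smul_right, ha]; ring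
      · intro T _ hT
        rw [real_inner_smul_left, real_inner_smul_right, walshCoeff_orthogonal hG hT.symm]; ring
      · exact fun h => absurd hS h
    rw [Finset.sum_congr rfl this, Finset.sum_powerset_apply_card (fun k => D k ^ 2 * a k)]
    simp
  rw [hnorm]
  have hterm : ∀ k ∈ Finset.range (I.card + 1), I.card.choose k * (D k ^ 2 * a k)
      ≤ B ^ 2 * (1 / 4) ^ d * ((Fintype.card ι).choose k * a k) := by
    intro k hk
    have hkm : k ≤ I.card := by simpa [Nat.lt_succ_iff] using hk
    have hak := ha0 k (by omega)
    have hB : 0 ≤ B := (abs_nonneg _).trans (hDB 0)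
    by_cases hkd : k < d
    · rw [hD0 k hkd]
      have : 0 ≤ B ^ 2 * (1 / 4) ^ d * ((Fintype.card ι).choose k * a k) := by positivity
      simpa using this
    · have hchoose : (I.card.choose k : ℝ) ≤ (1 / 4) ^ k * (Fintype.card ι).choose k := by
        rcases Nat.eq_zero_or_pos I.card with hm | hm
        · have : k = 0 := by omega
          subst this; simp
        · have e1 := choose_mul_pow_le (show I.card ≤ 4 * I.card by omega) k
          have e2 : I.card.choose k * 4 ^ k ≤ (4 * I.card).choose k := by
            refine Nat.le_of_mul_le_mul_right (c := I.card ^ k) ?_ (by positivity)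
            calc _ = I.card.choose k * (4 * I.card) ^ k := by rw [mul_pow]; ring
              _ ≤ _ := e1
          have e3 : (I.card.choose k * 4 ^ k : ℝ) ≤ (Fintype.card ι).choose k := by
            exact_mod_cast e2.trans (Nat.choose_le_choose k hI)
          rw [one_div, inv_pow, inv_mul_eq_div, le_div_iff₀ (by positivity)]
          exact e3
      have hpow : ((1 : ℝ) / 4) ^ k ≤ (1 / 4) ^ d :=
        pow_le_pow_of_le_one (by norm_num) (by norm_num) (by omega)
      have hDk : D k ^ 2 ≤ B ^ 2 := by
        rw [← sq_abs]; exact pow_le_pow_left₀ (abs_nonneg _) (hDB k) 2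
      calc _ ≤ ((1 / 4) ^ d * (Fintype.card ι).choose k) * (B ^ 2 * a k) := by
            refine mul_le_mul (hchoose.trans (by gcongr)) (by gcongr) (by positivity)
              (by positivity)
        _ = _ := by ring
  calc _ ≤ ∑ k ∈ Finset.range (I.card + 1),
        B ^ 2 * (1 / 4) ^ d * ((Fintype.card ι).choose k * a k) := Finset.sum_le_sum hterm
    _ ≤ ∑ k ∈ Finset.range (Fintype.card ι + 1),
        B ^ 2 * (1 / 4) ^ d * ((Fintype.card ι).choose k * a k) := by
      refine Finset.sum_le_sum_of_subset_of_nonneg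
        (Finset.range_subset_range.2 (by omega)) fun k hk _ => ?_
      have := ha0 k (by simpa [Nat.lt_succ_iff] using hk)
      have hB : 0 ≤ B := (abs_nonneg _).trans (hDB 0)
      positivity
    _ ≤ B ^ 2 * (1 / 4) ^ d := by
      rw [← Finset.mul_sum]
      exact mul_le_of_le_one_right (by positivity) hsum

end Cube

/-! ### A dual functional annihilating polynomials of low degree -/

/-- Weights of the dual functional: the signed binomial coefficients of the `2s`-th finite
difference, centred and normalized at `l = s`, divided by `4 (l - s)² - 1`. -/
def wt (s l : ℕ) : ℝ :=
  (-1) ^ (l + s) * ((2 * s).choose l / (2 * s).choose s) / (4 * ((l : ℝ) - s) ^ 2 - 1)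

/-- The nodes `4 (l - s)² τ`; each value other than `0` occurs for two indices `l`. -/
def node (s : ℕ) (τ : ℝ) (l : ℕ) : ℝ := 4 * ((l : ℝ) - s) ^ 2 * τ

lemma wt_self (s : ℕ) : wt s s = -1 := by
  have : ((2 * s).choose s : ℝ) ≠ 0 := by
    exact_mod_cast (Nat.choose_pos (by omega)).ne'
  simp [wt, div_self this, ← two_mul]

lemma sub_natCast_sq_ge_one {s l : ℕ} (h : l ≠ s) : 1 ≤ ((l : ℝ) - s) ^ 2 := by
  have : (1 : ℤ) ≤ ((l : ℤ) - s) ^ 2 := by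
    have : ((l : ℤ) - s) ≠ 0 := by omega
    have := sq_pos_of_ne_zero this
    omega
  exact_mod_cast this

lemma abs_wt_le {s l : ℕ} (h : l ≠ s) : |wt s l| ≤ 1 / (4 * ((l : ℝ) - s) ^ 2 - 1) := by
  have h1 := sub_natCast_sq_ge_one h
  have hpos : (0 : ℝ) < (2 * s).choose s := by
    exact_mod_cast Nat.choose_pos (by omega)
  have hc : ((2 * s).choose l : ℝ) / (2 * s).choose s ≤ 1 := by
    rw [div_le_one hpos]
    exact_mod_cast Nat.choose_le_centralBinom l s
  have hd : 0 < 4 * ((l : ℝ) - s) ^ 2 - 1 := by linarith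
  rw [wt, abs_div, abs_mul, abs_pow, abs_neg, abs_one, one_pow, one_mul, abs_of_pos hd,
    abs_of_nonneg (by positivity)]
  gcongr

lemma sum_telescope (s : ℕ) :
    ∑ k ∈ Finset.range s, 1 / (4 * ((k : ℝ) + 1) ^ 2 - 1)
      = 1 / 2 - 1 / (2 * (2 * (s : ℝ) + 1)) := by
  induction s with
  | zero => simp
  | succ s ih =>
    rw [Finset.sum_range_succ, ih]
    have h : 4 * ((s : ℝ) + 1) ^ 2 - 1 = (2 * s + 1) * (2 * (s + 1) + 1) := by ring
    have h1 : (0 : ℝ) < 2 * s + 1 := by positivity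
    have h2 : (0 : ℝ) < 2 * (s + 1) + 1 := by positivity
    rw [h]; push_cast
    field_simp
    ring

/-- The weights away from the central node have total mass at most that of the central one. -/
lemma sum_abs_wt_le (s : ℕ) : ∑ l ∈ (Finset.range (2 * s + 1)).erase s, |wt s l| ≤ 1 := by
  have hT : ∑ k ∈ Finset.range s, 1 / (4 * ((k : ℝ) + 1) ^ 2 - 1) ≤ 1 / 2 := by
    rw [sum_telescope]
    have : (0 : ℝ) ≤ 1 / (2 * (2 * (s : ℝ) + 1)) := by positivity
    linarith
  have hs : s ∈ Finset.range (2 * s + 1) := by simp; omega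
  have hsplit : ∑ l ∈ (Finset.range (2 * s + 1)).erase s, |wt s l|
      = ∑ l ∈ Finset.range s, |wt s l| + ∑ k ∈ Finset.range s, |wt s (s + 1 + k)| := by
    have h := Finset.add_sum_erase _ (fun l => |wt s l|) hs
    rw [show 2 * s + 1 = (s + 1) + s by ring, Finset.sum_range_add, Finset.sum_range_succ] at h
    rw [show 2 * s + 1 = (s + 1) + s by ring]
    linarith
  have hleft : ∑ l ∈ Finset.range s, |wt s l| ≤ 1 / 2 := by
    rw [← Finset.sum_range_reflect]
    refine (Finset.sum_le_sum fun k hk => ?_).trans hT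
    have hk : k < s := Finset.mem_range.1 hk
    refine (abs_wt_le (by omega)).trans (le_of_eq ?_)
    have : ((s - 1 - k : ℕ) : ℝ) = s - 1 - k := by
      rw [Nat.cast_sub (by omega), Nat.cast_sub (by omega)]; simp
    rw [this]; ring
  have hright : ∑ k ∈ Finset.range s, |wt s (s + 1 + k)| ≤ 1 / 2 := by
    refine (Finset.sum_le_sum fun k hk => ?_).trans hT
    refine (abs_wt_le (by omega)).trans (le_of_eq ?_)
    push_cast; ring
  linarith

open Polynomial in
/-- The `n`-th finite difference kills polynomials of degree less than `n`. -/
lemma sum_choose_eval_eq_zero {n : ℕ} (P : ℝ[X]) (hP : P.natDegree < n) :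
    ∑ l ∈ Finset.range (n + 1), (-1 : ℝ) ^ l * n.choose l * P.eval (l : ℝ) = 0 := by
  have h := congrFun (Polynomial.fwdDiff_iter_eq_zero_of_degree_lt hP) 0
  rw [fwdDiff_iter_eq_sum_shift] at h
  have h2 : ∑ l ∈ Finset.range (n + 1), (-1 : ℝ) ^ l * n.choose l * P.eval (l : ℝ)
      = (-1) ^ n * ∑ k ∈ Finset.range (n + 1),
        ((-1 : ℤ) ^ (n - k) * n.choose k) • P.eval ((0 : ℝ) + k • 1) := by
    rw [Finset.mul_sum]
    refine Finset.sum_congr rfl fun l hl => ?_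
    have hl : l ≤ n := by simpa [Nat.lt_succ_iff] using hl
    obtain ⟨j, rfl⟩ := Nat.exists_eq_add_of_le hl
    have : (-1 : ℝ) ^ (l + j) * (-1) ^ j = (-1) ^ l := by
      rw [pow_add, mul_assoc, ← mul_pow]; simp
    rw [zsmul_eq_mul]
    simp only [nsmul_eq_mul, mul_one, zero_add, Nat.add_sub_cancel_left]
    push_cast
    rw [← this]; ring
  rw [h2, h]; simp

open Polynomial in
/-- The functional `q ↦ ∑_l wt s l (q(node s τ l) - q(τ))` kills `q(t) = (1 - 2t)^k` for `k ≤ s`. -/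
lemma sum_wt_eq_zero {s k : ℕ} (hk : k ≤ s) (τ : ℝ) :
    ∑ l ∈ Finset.range (2 * s + 1),
      wt s l * ((1 - 2 * node s τ l) ^ k - (1 - 2 * τ) ^ k) = 0 := by
  -- `4 y - 1` divides the difference of powers, with a quotient of degree `< s` in `y = (l - s)²`
  let P : ℝ[X] := ∑ i ∈ Finset.range k,
    (C 1 - C (8 * τ) * (X - C (s : ℝ)) ^ 2) ^ i * C ((1 - 2 * τ) ^ (k - 1 - i))
  have hdeg : k ≠ 0 → P.natDegree < 2 * s := by
    intro hk0
    have : P.natDegree ≤ 2 * (k - 1) := by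
      refine natDegree_sum_le_of_forall_le _ _ fun i hi => ?_
      have hi : i < k := Finset.mem_range.1 hi
      refine (natDegree_mul_C_le _ _).trans ?_
      have : (C 1 - C (8 * τ) * (X - C (s : ℝ)) ^ 2).natDegree ≤ 2 := by compute_degree
      refine natDegree_pow_le.trans ?_
      calc _ ≤ i * 2 := Nat.mul_le_mul_left _ this
        _ ≤ _ := by omega
    omega
  have hterm : ∀ l, wt s l * ((1 - 2 * node s τ l) ^ k - (1 - 2 * τ) ^ k)
      = (-2 * τ * (-1) ^ s / (2 * s).choose s) *
        ((-1) ^ l * (2 * s).choose l * P.eval (l : ℝ)) := by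
    intro l
    have hne : 4 * ((l : ℝ) - s) ^ 2 - 1 ≠ 0 := by
      by_cases h : l = s
      · subst h; simp
      · have := sub_natCast_sq_ge_one h
        intro h0; linarith
    have hev : P.eval (l : ℝ) = ∑ i ∈ Finset.range k,
        (1 - 2 * node s τ l) ^ i * (1 - 2 * τ) ^ (k - 1 - i) := by
      simp only [P, eval_finsetSum, eval_mul, eval_pow, eval_sub, eval_C, eval_X, node]
      refine Finset.sum_congr rfl fun i _ => ?_
      ring
    have hg := (Commute.all (1 - 2 * node s τ l) (1 - 2 * τ)).geom_sum₂_mul k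
    rw [← hev] at hg
    rw [← hg, wt]
    have : (1 - 2 * node s τ l) - (1 - 2 * τ) = -2 * τ * (4 * ((l : ℝ) - s) ^ 2 - 1) := by
      rw [node]; ring
    rw [this, pow_add]
    field_simp
  simp only [hterm, ← Finset.mul_sum]
  rcases eq_or_ne k 0 with rfl | hk0
  · simp [P]
  · rw [sum_choose_eval_eq_zero P (hdeg hk0), mul_zero]

/-! ### The obstruction on the cube -/

section Main
variable {ι : Type} [Fintype ι] {H : Type} [NormedAddCommGroup H] [InnerProductSpace ℝ H]

lemma sum_abs_wt_le_two (s : ℕ) : ∑ l ∈ Finset.range (2 * s + 1), |wt s l| ≤ 2 := by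
  rw [← Finset.add_sum_erase _ _ (show s ∈ Finset.range (2 * s + 1) by simp; omega), wt_self]
  have := sum_abs_wt_le s
  norm_num
  linarith

lemma abs_one_sub_pow_le {t : ℝ} (h0 : 0 ≤ t) (h1 : t ≤ 1) (k : ℕ) : |(1 - 2 * t) ^ k| ≤ 1 := by
  rw [abs_pow]
  exact pow_le_one₀ (abs_nonneg _) (abs_le.2 ⟨by linarith, by linarith⟩)

lemma one_sub_pow_le {m : ℕ} {t : ℝ} (h1 : t ≤ 1) (hm : 9 ≤ m * t) :
    (1 - t) ^ m ≤ 1 / 10 := by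
  have h2 : (1 - t) ^ m ≤ Real.exp (-t) ^ m :=
    pow_le_pow_left₀ (by linarith) (by linarith [Real.add_one_le_exp (-t)]) m
  have h3 : Real.exp (-t) ^ m ≤ Real.exp (-9) := by
    rw [← Real.exp_nat_mul]
    exact Real.exp_le_exp.2 (by linarith)
  have h4 : Real.exp (-9) ≤ 1 / 10 := by
    rw [Real.exp_neg, ← one_div]
    exact one_div_le_one_div_of_le (by norm_num) (by linarith [Real.add_one_le_exp (9 : ℝ)])
  linarith

/-- An embedding of the cube with isotropic kernel represents a conjunction up to `1/6` only with
a weight vector of norm exponential in `s`, the square root (up to a constant) of the number of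
variables in the conjunction. -/
lemma cube_bound {Φ : (ι → ℤˣ) → H} {G : ℝ → ℝ}
    (hG : ∀ x y, ⟪Φ x, Φ y⟫ = G (∑ i, ((x i : ℤ) : ℝ) * ((y i : ℤ) : ℝ)))
    (h1 : ∀ x, ⟪Φ x, Φ x⟫ ≤ 1) (I : Finset ι) (hI : 4 * I.card ≤ Fintype.card ι)
    {s : ℕ} (hs1 : 1 ≤ s) (hs : 36 * s ^ 2 ≤ I.card) (w : H)
    (hw : ∀ x, |cubeConj I x - ⟪w, Φ x⟫| ≤ 1 / 6) :
    14 / 15 ≤ ‖w‖ * (2 * (1 / 2) ^ s) := by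
  have hsR : (36 : ℝ) * s ^ 2 ≤ I.card := by exact_mod_cast hs
  have hs1R : (1 : ℝ) ≤ (s : ℝ) ^ 2 := by
    have : (1 : ℝ) ≤ s := by exact_mod_cast hs1
    nlinarith
  have hm : (36 : ℝ) ≤ I.card := by linarith
  have hm0 : (0 : ℝ) < I.card := by linarith
  -- for `t ≥ 9 / |I|` the conjunction holds with probability at most `exp (-9)`
  let τ : ℝ := 9 / I.card
  have hmτ : I.card * τ = 9 := by simp only [τ]; field_simp
  have hτ0 : 0 < τ := by positivity
  have hτ1 : 4 * s ^ 2 * τ ≤ 1 := by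
    have : 4 * (s : ℝ) ^ 2 * τ = 36 * s ^ 2 / I.card := by simp only [τ]; ring
    rw [this]
    exact div_le_one_of_le₀ hsR hm0.le
  have hτ2 : τ ≤ 1 := by nlinarith
  have hnode0 : ∀ l, 0 ≤ node s τ l := fun l => by unfold node; positivity
  have hnode1 : ∀ l ∈ Finset.range (2 * s + 1), node s τ l ≤ 1 := by
    intro l hl
    have hl : l ≤ 2 * s := by simpa [Nat.lt_succ_iff] using hl
    have hl : (l : ℝ) ≤ 2 * s := by exact_mod_cast hl
    have hl0 : (0 : ℝ) ≤ l := by positivity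
    have : ((l : ℝ) - s) ^ 2 ≤ s ^ 2 := by nlinarith
    refine le_trans ?_ hτ1
    unfold node
    gcongr
  have hnodeτ : ∀ l, l ≠ s → τ ≤ node s τ l := by
    intro l hl
    have := sub_natCast_sq_ge_one hl
    unfold node
    nlinarith
  let e : ℝ → H := fun t => ∑ x, dens I t x • Φ x
  let u : ℝ → ℝ := fun t => ⟪w, e t⟫
  have hu : ∀ t, 0 ≤ t → t ≤ 1 → |2 * (1 - t) ^ I.card - 1 - u t| ≤ 1 / 6 := by
    intro t h0 h1
    have : 2 * (1 - t) ^ I.card - 1 - u t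
        = ∑ x, dens I t x * (cubeConj I x - ⟪w, Φ x⟫) := by
      simp only [mul_sub, Finset.sum_sub_distrib, sum_dens_cubeConj, u, e, inner_sum,
        real_inner_smul_right]
    rw [this]
    calc _ ≤ ∑ x, |dens I t x * (cubeConj I x - ⟪w, Φ x⟫)| := Finset.abs_sum_le_sum_abs _ _
      _ ≤ ∑ x, dens I t x * (1 / 6) := by
        refine Finset.sum_le_sum fun x _ => ?_
        rw [abs_mul, abs_of_nonneg (dens_nonneg I h0 h1 x)]
        exact mul_le_mul_of_nonneg_left (hw x) (dens_nonneg I h0 h1 x)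
      _ = 1 / 6 := by rw [← Finset.sum_mul, sum_dens, one_mul]
  have hu0 : 5 / 6 ≤ u 0 := by
    have := (abs_le.1 (hu 0 le_rfl zero_le_one)).2
    simp only [sub_zero, one_pow] at this
    linarith
  have hut : ∀ t, τ ≤ t → t ≤ 1 → -7 / 6 ≤ u t ∧ u t ≤ -19 / 30 := by
    intro t ht0 ht1
    have h := abs_le.1 (hu t (hτ0.le.trans ht0) ht1)
    have hp := one_sub_pow_le (m := I.card) ht1 (by nlinarith)
    have hp0 : 0 ≤ (1 - t) ^ I.card := pow_nonneg (by linarith) _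
    constructor <;> linarith
  let v : H := ∑ l ∈ Finset.range (2 * s + 1), wt s l • (e (node s τ l) - e τ)
  -- the pairing with `w`: the node `l = s` dominates
  have hwv : 14 / 15 ≤ -⟪w, v⟫ := by
    have hsplit : ⟪w, v⟫ = -(u 0 - u τ) + ∑ l ∈ (Finset.range (2 * s + 1)).erase s,
        wt s l * (u (node s τ l) - u τ) := by
      have : ⟪w, v⟫ = ∑ l ∈ Finset.range (2 * s + 1), wt s l * (u (node s τ l) - u τ) := by
        simp only [v, inner_sum, real_inner_smul_right, inner_sub_right, u]
      rw [this, ← Finset.add_sum_erase _ _ (show s ∈ Finset.range (2 * s + 1) by simp; omega),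
        wt_self]
      have : node s τ s = 0 := by simp [node]
      rw [this, neg_one_mul]
    have hτu := hut τ le_rfl hτ2
    have hrest : ∑ l ∈ (Finset.range (2 * s + 1)).erase s, wt s l * (u (node s τ l) - u τ)
        ≤ 8 / 15 := by
      calc _ ≤ ∑ l ∈ (Finset.range (2 * s + 1)).erase s, |wt s l| * (8 / 15) := by
            refine Finset.sum_le_sum fun l hl => (le_abs_self _).trans ?_
            rw [abs_mul]
            obtain ⟨hl1, hl2⟩ := Finset.mem_erase.1 hl
            have := hut _ (hnodeτ l hl1) (hnode1 l hl2)
            gcongr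
            exact abs_le.2 ⟨by linarith, by linarith⟩
        _ ≤ 1 * (8 / 15) := by
            rw [← Finset.sum_mul]
            have := sum_abs_wt_le s
            gcongr
        _ = _ := one_mul _
    linarith [hτu.2]
  -- the norm of `v`: only Walsh coefficients of level `> s` survive
  have hv : ‖v‖ ≤ 2 * (1 / 2) ^ s := by
    let D : ℕ → ℝ := fun k => ∑ l ∈ Finset.range (2 * s + 1),
      wt s l * ((1 - 2 * node s τ l) ^ k - (1 - 2 * τ) ^ k)
    have hvD : v = ∑ S ∈ I.powerset, D S.card • walshCoeff Φ S := by
      simp only [v, e, sum_dens_smul, D, ← Finset.sum_sub_distrib, ← sub_smul, Finset.smul_sum,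
        smul_smul, Finset.sum_smul]
      exact Finset.sum_comm
    have hDB : ∀ k, |D k| ≤ 4 := by
      intro k
      calc |D k| ≤ ∑ l ∈ Finset.range (2 * s + 1),
            |wt s l * ((1 - 2 * node s τ l) ^ k - (1 - 2 * τ) ^ k)| :=
            Finset.abs_sum_le_sum_abs _ _
        _ ≤ ∑ l ∈ Finset.range (2 * s + 1), |wt s l| * 2 := by
            refine Finset.sum_le_sum fun l hl => ?_
            rw [abs_mul]
            have a1 := abs_one_sub_pow_le (hnode0 l) (hnode1 l hl) k
            have a2 := abs_one_sub_pow_le hτ0.le hτ2 k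
            have := abs_sub ((1 - 2 * node s τ l) ^ k) ((1 - 2 * τ) ^ k)
            gcongr
            linarith
        _ ≤ 2 * 2 := by
            rw [← Finset.sum_mul]
            have := sum_abs_wt_le_two s
            gcongr
        _ = 4 := by norm_num
    have hnorm := norm_sq_le hG h1 I hI D 4 (s + 1)
      (fun k hk => sum_wt_eq_zero (Nat.lt_succ_iff.1 hk) τ) hDB
    rw [← hvD] at hnorm
    refine le_of_sq_le_sq ?_ (by positivity)
    refine hnorm.trans (le_of_eq ?_)
    rw [mul_pow, ← pow_mul, mul_comm s 2, pow_mul, pow_succ]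
    norm_num
    ring
  calc (14 / 15 : ℝ) ≤ -⟪w, v⟫ := hwv
    _ ≤ |⟪w, v⟫| := neg_le_abs _
    _ ≤ ‖w‖ * ‖v‖ := abs_real_inner_le_norm w v
    _ ≤ _ := by gcongr

end Main

/-! ### The cube inside a layer -/

/-- The embedding of `{±1}^N` into the layer `S_{N, 2N+r}`: the indicator of `x_i = 1`, followed by
the indicator of `x_i = -1`, followed by `r` zeros. -/
def layerPoint (N r : ℕ) (x : Fin N → ℤˣ) : EuclideanSpace ℝ (Fin (N + N + r)) :=
  WithLp.toLp 2 (Fin.append (Fin.append (fun i => (1 + ((x i : ℤ) : ℝ)) / 2)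
    (fun i => (1 - ((x i : ℤ) : ℝ)) / 2)) (fun _ => 0))

lemma layerPoint_mem (N r : ℕ) (x : Fin N → ℤˣ) : layerPoint N r x ∈ Layer (N + N + r) N := by
  constructor
  · intro j
    refine Fin.addCases (fun j => ?_) (fun j => ?_) j
    · refine Fin.addCases (fun i => ?_) (fun i => ?_) j <;>
        simp only [layerPoint, Fin.append_left, Fin.append_right] <;>
        rcases Int.units_eq_one_or (x i) with h | h <;> simp [h]
    · simp [layerPoint]
  · simp only [layerPoint, Fin.sum_univ_add, Fin.append_left, Fin.append_right,
      Finset.sum_const_zero, add_zero, ← Finset.sum_add_distrib]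
    have : ∀ i, (1 + ((x i : ℤ) : ℝ)) / 2 + (1 - ((x i : ℤ) : ℝ)) / 2 = 1 := fun i => by ring
    simp [this]

lemma inner_layerPoint (N r : ℕ) (x y : Fin N → ℤˣ) :
    ⟪layerPoint N r x, layerPoint N r y⟫
      = ((N : ℝ) + ∑ i, ((x i : ℤ) : ℝ) * ((y i : ℤ) : ℝ)) / 2 := by
  simp only [layerPoint, PiLp.inner_apply, Fin.sum_univ_add, Fin.append_left, Fin.append_right,
    RCLike.inner_apply, conj_trivial, mul_zero, Finset.sum_const_zero, add_zero,
    ← Finset.sum_add_distrib]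
  have : ∀ i, (1 + ((y i : ℤ) : ℝ)) / 2 * ((1 + ((x i : ℤ) : ℝ)) / 2) +
      (1 - ((y i : ℤ) : ℝ)) / 2 * ((1 - ((x i : ℤ) : ℝ)) / 2)
      = (1 + ((x i : ℤ) : ℝ) * ((y i : ℤ) : ℝ)) / 2 := fun i => by ring
  simp only [this, ← Finset.sum_div, Finset.sum_add_distrib]
  simp

lemma conj_layerPoint (N r : ℕ) (I : Finset (Fin N)) (x : Fin N → ℤˣ) :
    conj (N + N + r) (I.map ((Fin.castAddEmb N).trans (Fin.castAddEmb r))) (layerPoint N r x)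
      = cubeConj I x := by
  unfold conj cubeConj
  congr 1
  simp only [Finset.mem_map, forall_exists_index, and_imp, forall_apply_eq_imp_iff₂, eq_iff_iff]
  refine forall₂_congr fun i _ => ?_
  have hp : layerPoint N r x (((Fin.castAddEmb N).trans (Fin.castAddEmb r)) i)
      = (1 + ((x i : ℤ) : ℝ)) / 2 := by
    simp [layerPoint]
  rw [hp]
  rcases Int.units_eq_one_or (x i) with h | h
  · simp [h]
  · have : (-1 : ℤˣ) ≠ 1 := by decide
    simp [h, this]

/-- No fixed Euclidean kernel uniformly approximates all conjunctions on some layer with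
margin `2^{o(√n)}`. -/
theorem statement15 (f : ℕ → ℝ)
    (hf : Filter.Tendsto (fun n : ℕ => f n / Real.sqrt n) Filter.atTop (nhds 0)) :
    ∃ N : ℕ, ∀ n : ℕ, N ≤ n →
      ∃ p : ℕ, p ≤ n ∧
        ∃ I : Finset (Fin n),
          ∀ (H : Type) [NormedAddCommGroup H] [InnerProductSpace ℝ H]
            (φ : EuclideanSpace ℝ (Fin n) → H),
            IsLayerEuclideanEmbedding n p φ →
            ∀ w : H, ‖w‖ ≤ (2 : ℝ) ^ f n →
              ∃ x ∈ Layer n p, (1 / 6 : ℝ) < |conj n I x - ⟪w, φ x⟫| := by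
  obtain ⟨N₀, hN₀⟩ := Filter.eventually_atTop.1
    (hf.eventually (gt_mem_nhds (show (0 : ℝ) < 1 / 34 by norm_num)))
  refine ⟨max N₀ 18496, fun n hn => ?_⟩
  have hnN : N₀ ≤ n := (le_max_left _ _).trans hn
  have hn' : 18496 ≤ n := (le_max_right _ _).trans hn
  -- the polynomial degree `s` is of order `√n`, and beats `f n` eventually
  let s := Nat.sqrt (n / 288)
  have hs_le : s ^ 2 ≤ n / 288 := Nat.sqrt_le' _
  have hs_lt : n / 288 < (s + 1) ^ 2 := Nat.lt_succ_sqrt' _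
  have hs1 : 1 ≤ s := by
    by_contra h
    have : s = 0 := by omega
    rw [this] at hs_lt
    omega
  have hsf : f n + 3 ≤ s := by
    have hsqrt : (136 : ℝ) ≤ Real.sqrt n := by
      refine Real.le_sqrt_of_sq_le ?_
      norm_num
      exact_mod_cast hn'
    have hfn : f n < 1 / 34 * Real.sqrt n :=
      (div_lt_iff₀ (by linarith)).1 (hN₀ n hnN)
    have hsn : Real.sqrt n ≤ 17 * (s + 1) := by
      refine Real.sqrt_le_iff.2 ⟨by positivity, ?_⟩
      have : n ≤ (17 * (s + 1)) ^ 2 := by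
        rw [mul_pow]; omega
      exact_mod_cast this
    linarith
  obtain ⟨N, r, hNr, hN⟩ : ∃ N r, n = N + N + r ∧ N = n / 2 := ⟨n / 2, n % 2, by omega, rfl⟩
  clear_value s
  obtain ⟨I, -, hIcard⟩ := Finset.exists_subset_card_eq
    (s := (Finset.univ : Finset (Fin N))) (n := N / 4) (by simp; omega)
  have hsI : 36 * s ^ 2 ≤ I.card := by omega
  clear hN hs_le hs_lt hn hn' hnN hN₀ hf
  subst hNr
  refine ⟨N, by omega, I.map ((Fin.castAddEmb N).trans (Fin.castAddEmb r)), ?_⟩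
  intro H _ _ φ ⟨⟨g, hg⟩, hφ1⟩ w hw
  by_contra! hcon
  have hbound := cube_bound (Φ := fun x => φ (layerPoint N r x)) (G := fun a => g ((N + a) / 2))
    (fun x y => by rw [hg _ (layerPoint_mem N r x) _ (layerPoint_mem N r y), inner_layerPoint])
    (fun x => hφ1 _ (layerPoint_mem N r x)) I (by simp; omega) hs1 hsI w
    (fun x => by
      have := hcon _ (layerPoint_mem N r x)
      rwa [conj_layerPoint] at this)
  have hwle : ‖w‖ ≤ (2 : ℝ) ^ s / 8 := by
    calc ‖w‖ ≤ (2 : ℝ) ^ f (N + N + r) := hw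
      _ ≤ (2 : ℝ) ^ ((s : ℝ) - 3) :=
        Real.rpow_le_rpow_of_exponent_le (by norm_num) (by linarith)
      _ = (2 : ℝ) ^ s / 8 := by
        rw [Real.rpow_sub (by norm_num), Real.rpow_natCast]
        norm_num
  have : ‖w‖ * (2 * (1 / 2) ^ s) ≤ 1 / 4 := by
    calc _ ≤ (2 : ℝ) ^ s / 8 * (2 * (1 / 2) ^ s) := by gcongr
      _ = 1 / 4 * (2 * (1 / 2)) ^ s := by rw [mul_pow]; ring
      _ = 1 / 4 := by norm_num
  linarith
end
end
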